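/- arXiv:2111.00567 — 2 statements merged into one kernel-verified Lean document; each statement's English description precedes it below -/
import Mathlib

section
/- Let c > 0, α ∈ (0,1) and λ > 0, set q_n = 1 − c/n^α, and let (M_n) be a sequence of integers with 1 ≤ M_n ≤ n−1 such that lim_{n→∞} (n − M_n)/n^α = λ. Then lim_{n→∞} 𝒫_n^{q_n}(S(n,M_n)) = cλ e^{−cλ}. -/
open Finset Filter

/-- The number of inversions of a permutation of `Fin n`. -/
def invCount (n : ℕ) (σ : Equiv.Perm (Fin n)) : ℕ :=
  (Finset.univ.filter (fun p : Fin n × Fin n => p.1 < p.2 ∧ σ p.2 < σ p.1)).card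

/-- Normalization constant of the Mallows distribution:
`Z_n(q) = ∑_{σ ∈ S_n} q^{inv σ}`. -/
noncomputable def mallowsZ (n : ℕ) (q : ℝ) : ℝ :=
  ∑ σ : Equiv.Perm (Fin n), q ^ invCount n σ

/-- The Mallows probability of a set `A` of permutations:
`P_n^q(A) = (∑_{σ ∈ A} q^{inv σ}) / Z_n(q)`. -/
noncomputable def mallowsProb (n : ℕ) (q : ℝ) (A : Finset (Equiv.Perm (Fin n))) : ℝ :=
  (∑ σ ∈ A, q ^ invCount n σ) / mallowsZ n q

/-- The success event for the strategy `S(n,M)`.  Positions are indexed by `Fin n`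
(the index `i : Fin n` represents the `(i+1)`-st arriving item) and ranks are the
values of `σ` (the value `n-1`, i.e. the top of `Fin n`, represents the highest
rank `n`).  For `M ≥ 1` the strategy succeeds iff for some position `j` with
`(j:ℕ) ≥ M` (i.e. item number `j+1 ≥ M+1`) the item at position `j` has the top
rank and the maximum rank among the items strictly before position `j` equals the
maximum rank among the first `M` items.  For `M = 0` it succeeds iff the first
item has top rank. -/
def winEvent (n M : ℕ) : Finset (Equiv.Perm (Fin n)) :=
  if M = 0 then
    Finset.univ.filter (fun σ => ∀ i : Fin n, (i : ℕ) = 0 → (σ i : ℕ) = n - 1)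
  else
    Finset.univ.filter (fun σ => ∃ j : Fin n, M ≤ (j : ℕ) ∧ (σ j : ℕ) = n - 1 ∧
      (Finset.univ.filter (fun i : Fin n => i < j)).sup (fun i => (σ i : ℕ)) =
      (Finset.univ.filter (fun i : Fin n => (i : ℕ) < M)).sup (fun i => (σ i : ℕ)))

/-- `𝒫_n^q(S(n,M))`, the success probability of the strategy `S(n,M)` under the
Mallows distribution with parameter `q`. -/
noncomputable def succProb (n M : ℕ) (q : ℝ) : ℝ := mallowsProb n q (winEvent n M)

/-- Append a last item of rank `v` to the permutation `τ`. -/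
def extPerm (n : ℕ) (v : Fin (n + 1)) (τ : Equiv.Perm (Fin n)) : Equiv.Perm (Fin (n + 1)) :=
  ((finSuccEquiv' (Fin.last n)).trans (Equiv.optionCongr τ)).trans (finSuccEquiv' v).symm

lemma extPerm_last (n : ℕ) (v : Fin (n + 1)) (τ : Equiv.Perm (Fin n)) :
    extPerm n v τ (Fin.last n) = v := by
  simp [extPerm]

lemma extPerm_castSucc (n : ℕ) (v : Fin (n + 1)) (τ : Equiv.Perm (Fin n)) (i : Fin n) :
    extPerm n v τ i.castSucc = v.succAbove (τ i) := by
  simp only [extPerm, Equiv.trans_apply, finSuccEquiv'_last_apply_castSucc]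
  simp

lemma extPerm_bij (n : ℕ) : Function.Bijective
    (fun p : Fin (n + 1) × Equiv.Perm (Fin n) => extPerm n p.1 p.2) := by
  rw [Fintype.bijective_iff_injective_and_card]
  constructor
  · rintro ⟨v, τ⟩ ⟨w, ρ⟩ h
    simp only at h
    have h1 : v = w := by rw [← extPerm_last n v τ, h, extPerm_last]
    subst h1
    have h2 : τ = ρ := by
      ext i
      have := extPerm_castSucc n v τ i
      rw [h, extPerm_castSucc] at this
      rw [Fin.succAbove_right_injective this]
    rw [h2]
  · simp [Fintype.card_perm, Nat.factorial_succ]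

lemma invCount_sum (n : ℕ) (σ : Equiv.Perm (Fin n)) :
    invCount n σ = ∑ i : Fin n, ∑ j : Fin n, if i < j ∧ σ j < σ i then 1 else 0 := by
  unfold invCount
  rw [Finset.card_filter, Fintype.sum_prod_type]

lemma invCount_ext (n : ℕ) (v : Fin (n + 1)) (τ : Equiv.Perm (Fin n)) :
    invCount (n + 1) (extPerm n v τ) = (n - (v : ℕ)) + invCount n τ := by
  rw [invCount_sum, invCount_sum, Fin.sum_univ_castSucc]
  simp_rw [Fin.sum_univ_castSucc (n := n)]
  simp only [extPerm_last, extPerm_castSucc, Fin.succAbove_lt_succAbove_iff,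
    Fin.castSucc_lt_castSucc_iff, Fin.castSucc_lt_last, true_and, lt_irrefl,
    and_false, if_false, add_zero]
  rw [Finset.sum_add_distrib]
  have h1 : ∑ i : Fin n, (if v < v.succAbove (τ i) then 1 else 0) = n - (v : ℕ) := by
    rw [Equiv.sum_comp τ (fun i => if v < v.succAbove i then 1 else 0)]
    simp only [Fin.lt_succAbove_iff_le_castSucc, Fin.le_def, Fin.val_castSucc]
    rw [Fin.sum_univ_eq_sum_range (fun i => if (v : ℕ) ≤ i then 1 else 0) n, ← Finset.card_filter]
    have : (Finset.range n).filter (fun i => (v : ℕ) ≤ i) = Finset.Ico (v : ℕ) n := by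
      ext i; simp [and_comm]
    rw [this, Nat.card_Ico]
  have h2 : ∀ i : Fin n, ¬ Fin.last n < i.castSucc := fun i => not_lt.2 (Fin.le_last _)
  simp only [h1, h2, false_and, if_false, Finset.sum_const_zero, add_zero]
  rw [add_comm]

/-- No record after the first `M` items. -/
def NoRec (n M : ℕ) (σ : Equiv.Perm (Fin n)) : Prop :=
  ∀ i : Fin n, M ≤ (i : ℕ) → ∃ k : Fin n, (k : ℕ) < M ∧ σ i ≤ σ k

/-- Order-theoretic form of success. -/
def WinP (n M : ℕ) (σ : Equiv.Perm (Fin n)) : Prop :=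
  ∃ j : Fin n, M ≤ (j : ℕ) ∧ (∀ i, σ i ≤ σ j) ∧
    ∀ i : Fin n, i < j → M ≤ (i : ℕ) → ∃ k : Fin n, (k : ℕ) < M ∧ σ i ≤ σ k

lemma mem_winEvent (n M : ℕ) (hM : M ≠ 0) (σ : Equiv.Perm (Fin n)) :
    σ ∈ winEvent n M ↔ WinP n M σ := by
  unfold winEvent WinP
  rw [if_neg hM]
  simp only [Finset.mem_filter, Finset.mem_univ, true_and]
  refine exists_congr fun j => and_congr_right fun hj => and_congr ?_ ?_
  · constructor
    · intro h i
      rw [Fin.le_def, h]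
      have := (σ i).2
      omega
    · intro h
      have hn : n - 1 < n := by have := j.2; omega
      have h1 := h (σ.symm ⟨n - 1, hn⟩)
      rw [Equiv.apply_symm_apply, Fin.le_def] at h1
      simp only at h1
      have := (σ j).2
      omega
  · constructor
    · intro h i hij hi
      have h1 : (σ i : ℕ) ≤ (Finset.univ.filter (fun i : Fin n => i < j)).sup
          (fun i => (σ i : ℕ)) :=
        Finset.le_sup (f := fun i => (σ i : ℕ)) (by simpa using hij)
      rw [h] at h1
      have hne : (Finset.univ.filter (fun i : Fin n => (i : ℕ) < M)).Nonempty :=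
        ⟨⟨0, by have := j.2; omega⟩, by simp; omega⟩
      obtain ⟨k, hk, hk2⟩ := Finset.exists_mem_eq_sup _ hne (fun i => (σ i : ℕ))
      refine ⟨k, by simpa using hk, ?_⟩
      rw [Fin.le_def, ← hk2]
      exact h1
    · intro h
      apply le_antisymm
      · apply Finset.sup_le
        intro i hi
        have hi' : i < j := by simpa using hi
        by_cases hiM : (i : ℕ) < M
        · exact Finset.le_sup (f := fun i => (σ i : ℕ)) (by simpa using hiM)
        · obtain ⟨k, hk, hk2⟩ := h i hi' (by omega)
          exact le_trans (Fin.le_def.1 hk2)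
            (Finset.le_sup (f := fun i => (σ i : ℕ)) (by simpa using hk))
      · apply Finset.sup_mono
        intro i hi
        simp only [Finset.mem_filter, Finset.mem_univ, true_and] at hi ⊢
        rw [Fin.lt_def]; omega

lemma noRec_ext_last (n M : ℕ) (hMn : M ≤ n) (τ : Equiv.Perm (Fin n)) :
    ¬ NoRec (n + 1) M (extPerm n (Fin.last n) τ) := by
  intro h
  obtain ⟨k, hk, hk2⟩ := h (Fin.last n) (by simpa using hMn)
  rw [extPerm_last] at hk2
  have h1 : extPerm n (Fin.last n) τ k = extPerm n (Fin.last n) τ (Fin.last n) := by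
    rw [extPerm_last]; exact Fin.last_le_iff.1 hk2
  have h2 := (extPerm n (Fin.last n) τ).injective h1
  rw [h2] at hk
  simp at hk
  omega

lemma ext_top (n : ℕ) (v : Fin (n + 1)) (hv : v ≠ Fin.last n) (τ : Equiv.Perm (Fin n)) :
    ∃ i : Fin n, v.succAbove (τ i) = Fin.last n := by
  obtain ⟨i, hi⟩ := (extPerm n v τ).surjective (Fin.last n)
  induction i using Fin.lastCases with
  | last => rw [extPerm_last] at hi; exact absurd hi hv
  | cast i => exact ⟨i, by rw [← extPerm_castSucc, hi]⟩

lemma noRec_ext (n M : ℕ) (hMn : M ≤ n) (v : Fin (n + 1)) (hv : v ≠ Fin.last n)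
    (τ : Equiv.Perm (Fin n)) :
    NoRec (n + 1) M (extPerm n v τ) ↔ NoRec n M τ := by
  constructor
  · intro h i hi
    obtain ⟨k, hk, hk2⟩ := h i.castSucc (by simpa using hi)
    induction k using Fin.lastCases with
    | last => simp at hk; omega
    | cast k =>
      rw [extPerm_castSucc, extPerm_castSucc, Fin.succAbove_le_succAbove_iff] at hk2
      exact ⟨k, by simpa using hk, hk2⟩
  · intro h i hi
    obtain ⟨t, ht⟩ := ext_top n v hv τ
    by_cases htM : (t : ℕ) < M
    · refine ⟨t.castSucc, by simpa using htM, ?_⟩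
      rw [extPerm_castSucc, ht]
      exact Fin.le_last _
    · obtain ⟨k, hk, hk2⟩ := h t (by omega)
      refine ⟨k.castSucc, by simpa using hk, ?_⟩
      rw [extPerm_castSucc]
      refine le_trans (Fin.le_last _) ?_
      rw [← ht]
      exact Fin.succAbove_le_succAbove_iff.2 hk2

lemma winP_ext_last (n M : ℕ) (hMn : M ≤ n) (τ : Equiv.Perm (Fin n)) :
    WinP (n + 1) M (extPerm n (Fin.last n) τ) ↔ NoRec n M τ := by
  constructor
  · rintro ⟨j, hj, htop, h⟩ i hi
    have hjl : j = Fin.last n := by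
      apply (extPerm n (Fin.last n) τ).injective
      have := htop (Fin.last n)
      rw [extPerm_last] at this ⊢
      exact Fin.last_le_iff.1 this
    subst hjl
    obtain ⟨k, hk, hk2⟩ := h i.castSucc (Fin.castSucc_lt_last i) (by simpa using hi)
    induction k using Fin.lastCases with
    | last => simp at hk; omega
    | cast k =>
      rw [extPerm_castSucc, extPerm_castSucc, Fin.succAbove_le_succAbove_iff] at hk2
      exact ⟨k, by simpa using hk, hk2⟩
  · intro h
    refine ⟨Fin.last n, by simpa using hMn, fun i => ?_, fun i hi hiM => ?_⟩
    · rw [extPerm_last]; exact Fin.le_last _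
    · induction i using Fin.lastCases with
      | last => exact absurd hi (lt_irrefl _)
      | cast i =>
        obtain ⟨k, hk, hk2⟩ := h i (by simpa using hiM)
        refine ⟨k.castSucc, by simpa using hk, ?_⟩
        rw [extPerm_castSucc, extPerm_castSucc, Fin.succAbove_le_succAbove_iff]
        exact hk2

lemma winP_ext (n M : ℕ) (hMn : M ≤ n) (v : Fin (n + 1)) (hv : v ≠ Fin.last n)
    (τ : Equiv.Perm (Fin n)) :
    WinP (n + 1) M (extPerm n v τ) ↔ WinP n M τ := by
  obtain ⟨t, ht⟩ := ext_top n v hv τ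
  constructor
  · rintro ⟨j, hj, htop, h⟩
    induction j using Fin.lastCases with
    | last =>
      have := htop t.castSucc
      rw [extPerm_last, extPerm_castSucc, ht] at this
      exact absurd (Fin.last_le_iff.1 this) hv
    | cast j =>
      refine ⟨j, by simpa using hj, fun i => ?_, fun i hij hi => ?_⟩
      · have := htop i.castSucc
        rwa [extPerm_castSucc, extPerm_castSucc, Fin.succAbove_le_succAbove_iff] at this
      · obtain ⟨k, hk, hk2⟩ := h i.castSucc (by simpa using hij) (by simpa using hi)
        induction k using Fin.lastCases with
        | last => simp at hk; omega
        | cast k =>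
          rw [extPerm_castSucc, extPerm_castSucc, Fin.succAbove_le_succAbove_iff] at hk2
          exact ⟨k, by simpa using hk, hk2⟩
  · rintro ⟨j, hj, htop, h⟩
    have hjt : extPerm n v τ j.castSucc = Fin.last n := by
      rw [extPerm_castSucc]
      apply Fin.last_le_iff.1
      rw [← ht]
      exact Fin.succAbove_le_succAbove_iff.2 (htop t)
    refine ⟨j.castSucc, by simpa using hj, fun i => ?_, fun i hij hi => ?_⟩
    · rw [hjt]; exact Fin.le_last _
    · induction i using Fin.lastCases with
      | last => exact absurd hij (not_lt.2 (Fin.le_last _))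
      | cast i =>
        obtain ⟨k, hk, hk2⟩ := h i (by simpa using hij) (by simpa using hi)
        refine ⟨k.castSucc, by simpa using hk, ?_⟩
        rw [extPerm_castSucc, extPerm_castSucc, Fin.succAbove_le_succAbove_iff]
        exact hk2

lemma sum_ext (n : ℕ) (f : Equiv.Perm (Fin (n + 1)) → ℝ) :
    ∑ σ, f σ = ∑ v : Fin (n + 1), ∑ τ : Equiv.Perm (Fin n), f (extPerm n v τ) := by
  rw [← Fintype.sum_prod_type' (fun v τ => f (extPerm n v τ))]
  exact ((extPerm_bij n).sum_comp f).symm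

/-- Sums over the value of the last item. -/
lemma geom_castSucc (n : ℕ) (q : ℝ) :
    ∑ v : Fin n, q ^ (n - (v : ℕ)) = ∑ i ∈ Finset.range n, q ^ (i + 1) := by
  rw [Fin.sum_univ_eq_sum_range (fun i => q ^ (n - i)) n,
    ← Finset.sum_range_reflect (fun i => q ^ (i + 1))]
  apply Finset.sum_congr rfl
  intro i hi
  have := Finset.mem_range.1 hi
  congr 1
  omega

open Classical in
/-- Weight of the no-record event. -/
noncomputable def noRecW (n M : ℕ) (q : ℝ) : ℝ :=
  ∑ σ : Equiv.Perm (Fin n), if NoRec n M σ then q ^ invCount n σ else 0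

open Classical in
/-- Weight of the success event. -/
noncomputable def winW (n M : ℕ) (q : ℝ) : ℝ :=
  ∑ σ : Equiv.Perm (Fin n), if WinP n M σ then q ^ invCount n σ else 0

lemma mallowsZ_succ (n : ℕ) (q : ℝ) :
    mallowsZ (n + 1) q = (1 + ∑ i ∈ Finset.range n, q ^ (i + 1)) * mallowsZ n q := by
  unfold mallowsZ
  rw [sum_ext, ← geom_castSucc]
  simp_rw [invCount_ext, pow_add, ← Finset.mul_sum, ← Finset.sum_mul]
  rw [Fin.sum_univ_castSucc]
  simp [add_comm]

lemma noRecW_succ (n M : ℕ) (hMn : M ≤ n) (q : ℝ) :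
    noRecW (n + 1) M q = (∑ i ∈ Finset.range n, q ^ (i + 1)) * noRecW n M q := by
  classical
  unfold noRecW
  rw [sum_ext, ← geom_castSucc, Fin.sum_univ_castSucc, Finset.sum_mul]
  simp only [noRec_ext_last n M hMn, if_false, Finset.sum_const_zero, add_zero]
  apply Finset.sum_congr rfl
  intro v _
  rw [Finset.mul_sum]
  apply Finset.sum_congr rfl
  intro τ _
  rw [invCount_ext]
  simp only [noRec_ext n M hMn v.castSucc (Fin.castSucc_lt_last v).ne τ, pow_add,
    Fin.val_castSucc, mul_ite, mul_zero]

lemma winW_succ (n M : ℕ) (hMn : M ≤ n) (q : ℝ) :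
    winW (n + 1) M q =
      (∑ i ∈ Finset.range n, q ^ (i + 1)) * winW n M q + noRecW n M q := by
  classical
  unfold winW noRecW
  rw [sum_ext, ← geom_castSucc, Fin.sum_univ_castSucc, Finset.sum_mul]
  simp only [winP_ext_last n M hMn, invCount_ext, Fin.val_last, Nat.sub_self, zero_add]
  congr 1
  apply Finset.sum_congr rfl
  intro v _
  rw [Finset.mul_sum]
  apply Finset.sum_congr rfl
  intro τ _
  simp only [winP_ext n M hMn v.castSucc (Fin.castSucc_lt_last v).ne τ, pow_add,
    Fin.val_castSucc, mul_ite, mul_zero]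

lemma mallowsZ_pos (n : ℕ) (q : ℝ) (hq : 0 < q) : 0 < mallowsZ n q := by
  unfold mallowsZ
  exact Finset.sum_pos (fun _ _ => pow_pos hq _) ⟨1, Finset.mem_univ _⟩

lemma geom_eval (n : ℕ) (q : ℝ) (hq1 : q < 1) :
    ∑ i ∈ Finset.range n, q ^ (i + 1) = q * (1 - q ^ n) / (1 - q) := by
  have h : (1 - q) ≠ 0 := by linarith
  rw [eq_div_iff h]
  induction n with
  | zero => simp
  | succ n ih => rw [Finset.sum_range_succ, add_mul, ih]; ring

lemma noRecW_formula (M k : ℕ) (hM : M ≠ 0) (q : ℝ) (hq : 0 < q) (hq1 : q < 1) :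
    noRecW (M + k) M q =
      q ^ k * (1 - q ^ M) / (1 - q ^ (M + k)) * mallowsZ (M + k) q := by
  have hp : ∀ j : ℕ, j ≠ 0 → 1 - q ^ j ≠ 0 := fun j hj => by
    have := pow_lt_one₀ hq.le hq1 hj; linarith
  induction k with
  | zero =>
    have h := hp M hM
    simp only [add_zero, pow_zero, one_mul]
    rw [div_self h, one_mul]
    unfold noRecW mallowsZ
    apply Finset.sum_congr rfl
    intro σ _
    rw [if_pos]
    intro i hi
    have := i.2
    omega
  | succ k ih =>
    have h1 := hp (M + k) (by omega)
    have h2 := hp (M + k + 1) (by omega)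
    have h3 : 1 - q ≠ 0 := by linarith
    rw [← add_assoc, noRecW_succ _ _ (by omega), ih, mallowsZ_succ, geom_eval _ _ hq1]
    have h4 : 1 + q * (1 - q ^ (M + k)) / (1 - q) = (1 - q ^ (M + k + 1)) / (1 - q) := by
      field_simp; ring
    rw [h4]
    field_simp
    try ring

lemma winW_formula (M k : ℕ) (hM : M ≠ 0) (q : ℝ) (hq : 0 < q) (hq1 : q < 1) :
    winW (M + k) M q =
      q ^ k * (1 - q ^ M) / (1 - q ^ (M + k)) * ((1 - q) / q *
        ∑ i ∈ Finset.range k, 1 / (1 - q ^ (M + i))) * mallowsZ (M + k) q := by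
  have hp : ∀ j : ℕ, j ≠ 0 → 1 - q ^ j ≠ 0 := fun j hj => by
    have := pow_lt_one₀ hq.le hq1 hj; linarith
  induction k with
  | zero =>
    simp only [Finset.range_zero, Finset.sum_empty, mul_zero, zero_mul, add_zero]
    unfold winW
    apply Finset.sum_eq_zero
    intro σ _
    rw [if_neg]
    rintro ⟨j, hj, -⟩
    have := j.2
    omega
  | succ k ih =>
    have h1 := hp (M + k) (by omega)
    have h2 := hp (M + k + 1) (by omega)
    have h3 : 1 - q ≠ 0 := by linarith
    rw [← add_assoc, winW_succ _ _ (by omega), ih, noRecW_formula _ _ hM _ hq hq1,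
      mallowsZ_succ, geom_eval _ _ hq1, Finset.sum_range_succ]
    have h4 : 1 + q * (1 - q ^ (M + k)) / (1 - q) = (1 - q ^ (M + k + 1)) / (1 - q) := by
      field_simp; ring
    rw [h4]
    generalize ∑ i ∈ Finset.range k, 1 / (1 - q ^ (M + i)) = S
    have hq0 := hq.ne'
    field_simp
    try ring

lemma succProb_formula (M k : ℕ) (hM : M ≠ 0) (q : ℝ) (hq : 0 < q) (hq1 : q < 1) :
    succProb (M + k) M q =
      q ^ k * (1 - q ^ M) / (1 - q ^ (M + k)) * ((1 - q) / q *
        ∑ i ∈ Finset.range k, 1 / (1 - q ^ (M + i))) := by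
  classical
  unfold succProb mallowsProb
  rw [div_eq_iff (mallowsZ_pos _ _ hq).ne', ← winW_formula M k hM q hq hq1]
  unfold winW
  rw [← Finset.sum_filter]
  apply Finset.sum_congr _ (fun _ _ => rfl)
  ext σ
  simp [mem_winEvent _ _ hM]

/-- Two-sided bounds for the success probability. -/
lemma succProb_bounds (M k : ℕ) (hM : M ≠ 0) (q : ℝ) (hq : 0 < q) (hq1 : q < 1) :
    q ^ k * (1 - q ^ M) * ((1 - q) * k) ≤ succProb (M + k) M q ∧
    succProb (M + k) M q ≤ q ^ k * ((1 - q) * k) / (q * (1 - q ^ M)) := by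
  have hp : ∀ j : ℕ, j ≠ 0 → 0 < 1 - q ^ j := fun j hj => by
    have := pow_lt_one₀ hq.le hq1 hj; linarith
  have hpM := hp M hM
  have hpk := hp (M + k) (by omega)
  have hpk1 : 1 - q ^ (M + k) ≤ 1 := by have := pow_pos hq (M + k); linarith
  have h3 : 0 < 1 - q := by linarith
  have hmono : 1 - q ^ M ≤ 1 - q ^ (M + k) := by
    have := pow_le_pow_of_le_one hq.le hq1.le (Nat.le_add_right M k); linarith
  rw [succProb_formula M k hM q hq hq1]
  set S := ∑ i ∈ Finset.range k, 1 / (1 - q ^ (M + i)) with hS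
  have hS1 : (k : ℝ) ≤ S := by
    have : ∑ i ∈ Finset.range k, (1 : ℝ) ≤ S := by
      apply Finset.sum_le_sum
      intro i _
      rw [le_div_iff₀ (hp (M + i) (by omega))]
      have := pow_pos hq (M + i); linarith
    simpa using this
  have hS2 : S ≤ k * (1 / (1 - q ^ M)) := by
    have : S ≤ ∑ i ∈ Finset.range k, 1 / (1 - q ^ M) := by
      apply Finset.sum_le_sum
      intro i _
      apply one_div_le_one_div_of_le hpM
      have := pow_le_pow_of_le_one hq.le hq1.le (Nat.le_add_right M i); linarith
    simpa using this
  have hk0 : (0 : ℝ) ≤ k := Nat.cast_nonneg k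
  constructor
  · apply mul_le_mul _ _ (by positivity) (by positivity)
    · rw [le_div_iff₀ hpk]
      exact mul_le_of_le_one_right (by positivity) hpk1
    · apply mul_le_mul _ hS1 hk0 (by positivity)
      rw [le_div_iff₀ hq]
      nlinarith
  · have e : q ^ k * ((1 - q) * k) / (q * (1 - q ^ M)) =
        q ^ k * ((1 - q) / q * (k * (1 / (1 - q ^ M)))) := by
      have := hq.ne'
      field_simp
    rw [e]
    apply mul_le_mul
    · rw [div_le_iff₀ hpk]
      exact mul_le_mul_of_nonneg_left hmono (by positivity)
    · exact mul_le_mul_of_nonneg_left hS2 (by positivity)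
    · have : 0 ≤ S := hk0.trans hS1
      positivity
    · positivity

lemma pow_bounds (x : ℝ) (k : ℕ) (hx1 : x < 1) :
    Real.exp (-(k * x / (1 - x))) ≤ (1 - x) ^ k ∧ (1 - x) ^ k ≤ Real.exp (-(k * x)) := by
  have h : 0 < 1 - x := by linarith
  constructor
  · have h1 : Real.exp (-(x / (1 - x))) ≤ 1 - x := by
      have := Real.add_one_le_exp (x / (1 - x))
      have e : x / (1 - x) + 1 = (1 - x)⁻¹ := by field_simp; ring
      rw [e] at this
      rw [Real.exp_neg]
      exact inv_le_of_inv_le₀ h this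
    calc _ = Real.exp (-(x / (1 - x))) ^ k := by
            rw [← Real.exp_nat_mul]; congr 1; ring
      _ ≤ _ := pow_le_pow_left₀ (Real.exp_pos _).le h1 k
  · calc (1 - x) ^ k ≤ Real.exp (-x) ^ k :=
            pow_le_pow_left₀ h.le (by have := Real.add_one_le_exp (-x); linarith) k
      _ = _ := by rw [← Real.exp_nat_mul]; congr 1; ring

theorem stmt_7 (c α lam : ℝ) (hc : 0 < c) (hα : α ∈ Set.Ioo (0 : ℝ) 1) (hlam : 0 < lam)
    (M : ℕ → ℕ) (hM : ∀ n, 2 ≤ n → 1 ≤ M n ∧ M n ≤ n - 1)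
    (hlim : Tendsto (fun n : ℕ => ((n : ℝ) - M n) / (n : ℝ) ^ α) atTop (nhds lam)) :
    Tendsto (fun n : ℕ => succProb n (M n) (1 - c / (n : ℝ) ^ α)) atTop
      (nhds (c * lam * Real.exp (-(c * lam)))) := by
  obtain ⟨hα0, hα1⟩ := hα
  have hcast : Tendsto (fun n : ℕ => (n : ℝ)) atTop atTop := tendsto_natCast_atTop_atTop
  have hpow : Tendsto (fun n : ℕ => (n : ℝ) ^ α) atTop atTop :=
    (tendsto_rpow_atTop hα0).comp hcast
  have hx : Tendsto (fun n : ℕ => c / (n : ℝ) ^ α) atTop (nhds 0) :=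
    hpow.const_div_atTop c
  have hkx : Tendsto (fun n : ℕ => ((n - M n : ℕ) : ℝ) * (c / (n : ℝ) ^ α)) atTop
      (nhds (c * lam)) := by
    refine (hlim.const_mul c).congr' ?_
    filter_upwards [eventually_ge_atTop 2] with n hn
    have := hM n hn
    rw [Nat.cast_sub (by omega)]
    ring
  have hMx : Tendsto (fun n : ℕ => (M n : ℝ) * (c / (n : ℝ) ^ α)) atTop atTop := by
    have h1 : Tendsto (fun n : ℕ => c * (n : ℝ) ^ (1 - α)) atTop atTop :=
      ((tendsto_rpow_atTop (by linarith : 0 < 1 - α)).comp hcast).const_mul_atTop hc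
    refine (h1.atTop_add hkx.neg).congr' ?_
    filter_upwards [eventually_ge_atTop 2] with n hn
    have := hM n hn
    have hn0 : (0 : ℝ) < n := by positivity
    rw [Nat.cast_sub (by omega), Real.rpow_sub hn0, Real.rpow_one]
    ring
  have hqM : Tendsto (fun n : ℕ => (1 - c / (n : ℝ) ^ α) ^ (M n)) atTop (nhds 0) := by
    refine tendsto_of_tendsto_of_tendsto_of_le_of_le' tendsto_const_nhds
      (Real.tendsto_exp_neg_atTop_nhds_zero.comp hMx) ?_ ?_
    · filter_upwards [hx.eventually_lt_const one_pos] with n hn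
      exact pow_nonneg (by linarith) _
    · filter_upwards [hx.eventually_lt_const one_pos] with n hn
      exact (pow_bounds _ _ hn).2
  have hqk : Tendsto (fun n : ℕ => (1 - c / (n : ℝ) ^ α) ^ (n - M n)) atTop
      (nhds (Real.exp (-(c * lam)))) := by
    have hlow : Tendsto (fun n : ℕ => Real.exp (-(((n - M n : ℕ) : ℝ) * (c / (n : ℝ) ^ α) /
        (1 - c / (n : ℝ) ^ α)))) atTop (nhds (Real.exp (-(c * lam)))) := by
      have := (hkx.div (hx.const_sub 1) (by norm_num)).neg
      rw [sub_zero, div_one] at this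
      exact (Real.continuous_exp.tendsto _).comp this
    refine tendsto_of_tendsto_of_tendsto_of_le_of_le' hlow
      ((Real.continuous_exp.tendsto _).comp hkx.neg) ?_ ?_
    · filter_upwards [hx.eventually_lt_const one_pos] with n hn
      exact (pow_bounds _ _ hn).1
    · filter_upwards [hx.eventually_lt_const one_pos] with n hn
      exact (pow_bounds _ _ hn).2
  have hL : Tendsto (fun n : ℕ => (1 - c / (n : ℝ) ^ α) ^ (n - M n) *
      (1 - (1 - c / (n : ℝ) ^ α) ^ (M n)) * (((n - M n : ℕ) : ℝ) * (c / (n : ℝ) ^ α))) atTop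
      (nhds (c * lam * Real.exp (-(c * lam)))) := by
    convert (hqk.mul (hqM.const_sub 1)).mul hkx using 2
    ring
  have hU : Tendsto (fun n : ℕ => (1 - c / (n : ℝ) ^ α) ^ (n - M n) *
      (((n - M n : ℕ) : ℝ) * (c / (n : ℝ) ^ α)) /
      ((1 - c / (n : ℝ) ^ α) * (1 - (1 - c / (n : ℝ) ^ α) ^ (M n)))) atTop
      (nhds (c * lam * Real.exp (-(c * lam)))) := by
    have h := (hqk.mul hkx).div ((hx.const_sub 1).mul (hqM.const_sub 1)) (by norm_num)
    rw [sub_zero, mul_one, div_one, mul_comm (Real.exp _)] at h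
    exact h
  have hev : ∀ᶠ n : ℕ in atTop, 2 ≤ n ∧ 0 < 1 - c / (n : ℝ) ^ α ∧ 1 - c / (n : ℝ) ^ α < 1 := by
    filter_upwards [hx.eventually_lt_const one_pos, eventually_ge_atTop 2] with n hn hn2
    have hn0 : (0 : ℝ) < n := by positivity
    have : 0 < c / (n : ℝ) ^ α := div_pos hc (Real.rpow_pos_of_pos hn0 _)
    exact ⟨hn2, by linarith, by linarith⟩
  refine tendsto_of_tendsto_of_tendsto_of_le_of_le' hL hU ?_ ?_
  · filter_upwards [hev] with n ⟨hn, h0, h1⟩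
    have hMn := hM n hn
    have := (succProb_bounds (M n) (n - M n) (by omega) _ h0 h1).1
    rw [Nat.add_sub_cancel' (by omega)] at this
    refine le_trans (le_of_eq ?_) this
    ring
  · filter_upwards [hev] with n ⟨hn, h0, h1⟩
    have hMn := hM n hn
    have := (succProb_bounds (M n) (n - M n) (by omega) _ h0 h1).2
    rw [Nat.add_sub_cancel' (by omega)] at this
    refine le_trans this (le_of_eq ?_)
    congr 2
    ring
end

section
/- Fix q ∈ (0,1) and let (M_n) be a sequence of integers with 0 ≤ M_n ≤ n−1 such that lim_{n→∞} (n − M_n) = ∞. Then lim_{n→∞} 𝒫_n^q(S(n,M_n)) = 0. -/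
open Finset Filter

/-- Lehmer code: number of earlier entries that are larger. -/
def lcode {n : ℕ} (σ : Equiv.Perm (Fin n)) (i : Fin n) : ℕ :=
  (Finset.univ.filter (fun k : Fin n => k < i ∧ σ i < σ k)).card

lemma lcode_le {n : ℕ} (σ : Equiv.Perm (Fin n)) (i : Fin n) : lcode σ i ≤ i := by
  calc lcode σ i ≤ (Finset.Iio i).card := by
        apply Finset.card_le_card
        intro k hk
        simp at hk ⊢
        exact hk.1
    _ = i := by simp

lemma invCount_eq {n : ℕ} (σ : Equiv.Perm (Fin n)) : invCount n σ = ∑ i, lcode σ i := by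
  unfold invCount lcode
  simp only [Finset.card_filter]
  rw [Fintype.sum_prod_type, Finset.sum_comm]

lemma lcode_order {n : ℕ} (σ τ : Equiv.Perm (Fin n)) (h : lcode σ = lcode τ) (m : ℕ) :
    ∀ b : Fin n, (b : ℕ) < m → ∀ a : Fin n, a < b → (σ b < σ a ↔ τ b < τ a) := by
  induction m with
  | zero => intro b hb; omega
  | succ m ih =>
    intro b hb
    by_cases hbm : (b : ℕ) < m
    · exact ih b hbm
    have hlt : ∀ x y : Fin n, x < b → y < b → σ x < σ y → τ x < τ y := by
      intro x y hx hy hxy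
      rcases lt_trichotomy x y with h1 | h1 | h1
      · have := ih y (by omega) x h1
        by_contra hc
        have h2 : τ y < τ x := lt_of_le_of_ne (not_lt.mp hc) (fun e => h1.ne' (τ.injective e))
        exact absurd hxy (not_lt.mpr (this.mpr h2).le)
      · subst h1; exact absurd hxy (lt_irrefl _)
      · exact (ih x (by omega) y h1).mp hxy
    have hcard := congrFun h b
    unfold lcode at hcard
    have key : (Finset.univ.filter (fun k : Fin n => k < b ∧ σ b < σ k)) =
        (Finset.univ.filter (fun k : Fin n => k < b ∧ τ b < τ k)) := by
      by_cases hs : (Finset.univ.filter (fun k : Fin n => k < b ∧ σ b < σ k)) ⊆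
        (Finset.univ.filter (fun k : Fin n => k < b ∧ τ b < τ k))
      · exact Finset.eq_of_subset_of_card_le hs hcard.ge
      · symm
        apply Finset.eq_of_subset_of_card_le _ hcard.le
        obtain ⟨x, hx, hx'⟩ := Finset.not_subset.mp hs
        intro y hy
        simp only [Finset.mem_filter, Finset.mem_univ, true_and] at hx hx' hy ⊢
        refine ⟨hy.1, ?_⟩
        have hx2 : τ x ≤ τ b := by
          by_contra hc
          exact hx' ⟨hx.1, not_le.mp hc⟩
        by_contra hc
        have h1 : σ y < σ x := lt_of_le_of_lt (not_lt.mp hc) hx.2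
        have h2 := hlt y x hy.1 hx.1 h1
        exact absurd (h2.trans_le hx2) (not_lt.mpr hy.2.le)
    intro a ha
    have := Finset.ext_iff.mp key a
    simpa [ha] using this

lemma lcode_injective {n : ℕ} : Function.Injective (lcode (n := n)) := by
  intro σ τ h
  have h1 : ∀ x y : Fin n, σ x < σ y → τ x < τ y := by
    intro x y hxy
    rcases lt_trichotomy x y with h1 | h1 | h1
    · have := lcode_order σ τ h n y y.2 x h1
      by_contra hc
      have h2 : τ y < τ x := lt_of_le_of_ne (not_lt.mp hc) (fun e => h1.ne' (τ.injective e))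
      exact absurd hxy (not_lt.mpr (this.mpr h2).le)
    · subst h1; exact absurd hxy (lt_irrefl _)
    · exact (lcode_order σ τ h n x x.2 y h1).mp hxy
  have hm : StrictMono (fun z => τ (σ.symm z)) := by
    intro x y hxy
    apply h1
    simpa using hxy
  have hid : ∀ z, τ (σ.symm z) = z := by
    have e : (hm.orderIsoOfSurjective _ (τ.surjective.comp σ.symm.surjective)) =
      OrderIso.refl (Fin n) := Subsingleton.elim _ _
    intro z
    have := congrArg (fun f => f z) e
    simpa using this
  ext x
  have := hid (σ x)
  simp at this
  rw [this]

lemma lcode_surj {n : ℕ} (f : Fin n → ℕ) (hf : ∀ i, f i ≤ i) :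
    ∃ σ : Equiv.Perm (Fin n), lcode σ = f := by
  let F : Equiv.Perm (Fin n) → ((i : Fin n) → Fin ((i : ℕ) + 1)) :=
    fun σ i => ⟨lcode σ i, Nat.lt_succ_of_le (lcode_le σ i)⟩
  have hF : Function.Injective F := by
    intro σ τ h
    apply lcode_injective
    funext i
    have := congrFun h i
    simpa [F] using this
  have hb : Function.Bijective F := by
    rw [Fintype.bijective_iff_injective_and_card]
    refine ⟨hF, ?_⟩
    rw [Fintype.card_perm, Fintype.card_pi]
    simp only [Fintype.card_fin]
    rw [Fin.prod_univ_eq_prod_range (fun i => i + 1) n, Finset.prod_range_add_one_eq_factorial]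
  obtain ⟨σ, hσ⟩ := hb.2 (fun i => ⟨f i, Nat.lt_succ_of_le (hf i)⟩)
  refine ⟨σ, ?_⟩
  funext i
  have := congrFun hσ i
  simpa [F] using this

/-- The permutations whose code is positive on `S`. -/
def posOn {n : ℕ} (S : Finset (Fin n)) : Finset (Equiv.Perm (Fin n)) :=
  Finset.univ.filter (fun σ => ∀ i ∈ S, 1 ≤ lcode σ i)

lemma posOn_sum {n : ℕ} (S : Finset (Fin n)) (q : ℝ) (hq : 0 < q) :
    ∑ σ ∈ posOn S, q ^ invCount n σ ≤ q ^ S.card * mallowsZ n q := by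
  have hex : ∀ σ : Equiv.Perm (Fin n), ∃ τ : Equiv.Perm (Fin n),
      lcode τ = fun i => if i ∈ S then lcode σ i - 1 else lcode σ i := by
    intro σ
    apply lcode_surj
    intro i
    have := lcode_le σ i
    split_ifs <;> omega
  choose φ hφ using hex
  have hinv : ∀ σ ∈ posOn S, invCount n σ = S.card + invCount n (φ σ) := by
    intro σ hσ
    simp only [posOn, Finset.mem_filter, Finset.mem_univ, true_and] at hσ
    rw [invCount_eq, invCount_eq, hφ]
    have : S.card = ∑ i : Fin n, if i ∈ S then 1 else 0 := by simp
    rw [this, ← Finset.sum_add_distrib]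
    apply Finset.sum_congr rfl
    intro i _
    split_ifs with hi
    · have := hσ i hi
      omega
    · omega
  have hinj : Set.InjOn φ (posOn S : Set (Equiv.Perm (Fin n))) := by
    intro σ hσ τ hτ h
    simp only [posOn, Finset.coe_filter, Finset.mem_univ, true_and, Set.mem_ofPred_eq] at hσ hτ
    apply lcode_injective
    funext i
    have h1 := congrFun (hφ σ) i
    have h2 := congrFun (hφ τ) i
    rw [h, h2] at h1
    by_cases hi : i ∈ S
    · simp only [hi, if_true] at h1
      have := hσ i hi
      have := hτ i hi
      omega
    · simpa [hi] using h1.symm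
  calc ∑ σ ∈ posOn S, q ^ invCount n σ
      = ∑ σ ∈ posOn S, q ^ S.card * q ^ invCount n (φ σ) := by
        apply Finset.sum_congr rfl
        intro σ hσ
        rw [hinv σ hσ, pow_add]
    _ = q ^ S.card * ∑ σ ∈ (posOn S).image φ, q ^ invCount n σ := by
        rw [← Finset.mul_sum, Finset.sum_image hinj]
    _ ≤ q ^ S.card * mallowsZ n q := by
        apply mul_le_mul_of_nonneg_left _ (by positivity)
        unfold mallowsZ
        apply Finset.sum_le_sum_of_subset_of_nonneg (Finset.subset_univ _)
        intros
        positivity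

lemma lcode_pos {n : ℕ} (σ : Equiv.Perm (Fin n)) (i k : Fin n) (h : k < i) (h2 : σ i < σ k) :
    1 ≤ lcode σ i :=
  Finset.card_pos.mpr ⟨k, by simp [h, h2]⟩

/-- positions from `M` on -/
def tailPos (n M : ℕ) : Finset (Fin n) := Finset.univ.filter (fun i => M ≤ (i : ℕ))

lemma tailPos_card (n M : ℕ) (h : M < n) : (tailPos n M).card = n - M := by
  have : tailPos n M = Finset.Ici (⟨M, h⟩ : Fin n) := by
    ext i; simp [tailPos, Fin.le_def]
  rw [this, Fin.card_Ici]

lemma top_pos {n : ℕ} (σ : Equiv.Perm (Fin n)) (i j : Fin n) (h : j < i)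
    (hj : (σ j : ℕ) = n - 1) : 1 ≤ lcode σ i := by
  apply lcode_pos σ i j h
  have h1 : (σ i : ℕ) ≠ σ j := fun e => h.ne' (σ.injective (Fin.ext e))
  have := (σ i).2
  rw [Fin.lt_def]; omega

lemma win_subset (n M : ℕ) (h : M < n) :
    winEvent n M ⊆ (tailPos n M).biUnion (fun j => posOn ((tailPos n M).erase j)) := by
  intro σ hσ
  unfold winEvent at hσ
  split_ifs at hσ with hM
  · subst hM
    simp only [Finset.mem_filter, Finset.mem_univ, true_and] at hσ
    simp only [Finset.mem_biUnion, posOn, Finset.mem_filter, Finset.mem_univ, true_and, tailPos,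
      Finset.mem_erase]
    refine ⟨⟨0, h⟩, by simp, ?_⟩
    rintro i ⟨hi, -⟩
    refine top_pos σ i ⟨0, h⟩ ?_ (hσ _ rfl)
    rw [Fin.lt_def]
    exact Nat.pos_of_ne_zero (fun e => hi (Fin.ext e))
  · simp only [Finset.mem_filter, Finset.mem_univ, true_and] at hσ
    obtain ⟨j, hMj, hj, hsup⟩ := hσ
    simp only [Finset.mem_biUnion, posOn, Finset.mem_filter, Finset.mem_univ, true_and, tailPos,
      Finset.mem_erase]
    refine ⟨j, hMj, ?_⟩
    rintro i ⟨hij, hMi⟩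
    rcases lt_or_gt_of_ne hij with hlt | hgt
    · have h1 : (σ i : ℕ) ≤ (Finset.univ.filter (fun i : Fin n => i < j)).sup
          (fun i => (σ i : ℕ)) :=
        Finset.le_sup (f := fun i => (σ i : ℕ)) (by simpa using hlt)
      rw [hsup] at h1
      obtain ⟨k, hk, hk2⟩ := Finset.exists_mem_eq_sup
        (Finset.univ.filter (fun i : Fin n => (i : ℕ) < M))
        ⟨⟨0, by omega⟩, by simp; omega⟩ (fun i => (σ i : ℕ))
      rw [hk2] at h1
      simp only [Finset.mem_filter, Finset.mem_univ, true_and] at hk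
      have hki : k < i := by rw [Fin.lt_def]; omega
      apply lcode_pos σ i k hki
      exact lt_of_le_of_ne h1 (fun e => hki.ne' (σ.injective e))
    · exact top_pos σ i j hgt hj

lemma sum_biUnion_le_aux {α β : Type*} [DecidableEq α] [DecidableEq β] (s : Finset α)
    (t : α → Finset β) (f : β → ℝ) (hf : ∀ x, 0 ≤ f x) :
    ∑ x ∈ s.biUnion t, f x ≤ ∑ a ∈ s, ∑ x ∈ t a, f x := by
  induction s using Finset.induction_on with
  | empty => simp
  | insert a s ha ih =>
    rw [Finset.biUnion_insert, Finset.sum_insert ha]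
    have h1 := Finset.sum_union_inter (s₁ := t a) (s₂ := s.biUnion t) (f := f)
    have h2 : 0 ≤ ∑ x ∈ t a ∩ s.biUnion t, f x := Finset.sum_nonneg (fun x _ => hf x)
    linarith

lemma succProb_le (n M : ℕ) (h : M < n) (q : ℝ) (hq : 0 < q) :
    succProb n M q ≤ ((n - M : ℕ) : ℝ) * q ^ (n - M - 1) := by
  unfold succProb mallowsProb
  rw [div_le_iff₀ (mallowsZ_pos n q hq)]
  calc ∑ σ ∈ winEvent n M, q ^ invCount n σ
      ≤ ∑ σ ∈ (tailPos n M).biUnion (fun j => posOn ((tailPos n M).erase j)),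
          q ^ invCount n σ :=
        Finset.sum_le_sum_of_subset_of_nonneg (win_subset n M h) (fun _ _ _ => by positivity)
    _ ≤ ∑ j ∈ tailPos n M, ∑ σ ∈ posOn ((tailPos n M).erase j), q ^ invCount n σ := by
        exact sum_biUnion_le_aux _ _ _ (fun _ => by positivity)
    _ ≤ ∑ j ∈ tailPos n M, q ^ (n - M - 1) * mallowsZ n q := by
        apply Finset.sum_le_sum
        intro j hj
        have := posOn_sum ((tailPos n M).erase j) q hq
        rwa [Finset.card_erase_of_mem hj, tailPos_card n M h] at this
    _ = ((n - M : ℕ) : ℝ) * q ^ (n - M - 1) * mallowsZ n q := by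
        rw [Finset.sum_const, tailPos_card n M h, nsmul_eq_mul]; ring

theorem stmt_9 (q : ℝ) (hq : q ∈ Set.Ioo (0 : ℝ) 1)
    (M : ℕ → ℕ) (hM : ∀ n, 1 ≤ n → M n ≤ n - 1)
    (hlim : Tendsto (fun n : ℕ => n - M n) atTop atTop) :
    Tendsto (fun n : ℕ => succProb n (M n) q) atTop (nhds 0) := by
  obtain ⟨h0, h1⟩ := hq
  have hl : Tendsto (fun k : ℕ => (k : ℝ) * q ^ (k - 1)) atTop (nhds 0) := by
    have h2 := (tendsto_self_mul_const_pow_of_lt_one h0.le h1).const_mul q⁻¹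
    rw [mul_zero] at h2
    refine h2.congr' ?_
    filter_upwards [eventually_ge_atTop 1] with k hk
    obtain ⟨m, rfl⟩ := Nat.exists_eq_add_of_le' hk
    simp only [Nat.add_sub_cancel, pow_succ]
    field_simp
  have hl2 := hl.comp hlim
  refine tendsto_of_tendsto_of_tendsto_of_le_of_le' tendsto_const_nhds hl2 ?_ ?_
  · refine Eventually.of_forall (fun n => ?_)
    unfold succProb mallowsProb
    exact div_nonneg (Finset.sum_nonneg (fun _ _ => by positivity)) (mallowsZ_pos n q h0).le
  · filter_upwards [eventually_ge_atTop 1] with n hn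
    have := hM n hn
    exact succProb_le n (M n) (by omega) q h0
end
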